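/- Let (α_n)_{n≥0} and (a_n)_{n≥0} be sequences with α_n ∈ (0,1/2) and a_n an integer with a_n ≥ 2, satisfying 1/α_n = a_n − α_{n+1} for all n ≥ 0, and let (u_n)_{n≥0} be positive reals such that a_{n+1} ≥ a_n^{u_n a_n} + 1/2 for all n ≥ 0. Then for every n ≥ 0 one has 1/α_{n+1} > (1/α_n)^{u_n/α_n}, and consequently log(1/α_{n+1}) ≥ (u_n/α_n) · log(1/α_n). -/

import Mathlib

open Filter

/-! For `c ≥ 0`, the function `t ^ (c * t)` increases with `t ≥ 1`. The digit `a n` exceeds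
`1 / α n` by less than `δ` (`1 / 2` for the nearest-integer algorithm), so passing from `1 / α n` to
`a n` only enlarges the power, and the summand `δ` in the growth condition pays for passing back
from `a (n + 1)` to `1 / α (n + 1)`. -/

lemma rpow_mul_self_le_rpow_mul_self {x y c : ℝ} (hx : 0 ≤ x) (hxy : x ≤ y) (hy : 1 ≤ y)
    (hc : 0 ≤ c) : x ^ (c * x) ≤ y ^ (c * y) :=
  calc x ^ (c * x) ≤ y ^ (c * x) := Real.rpow_le_rpow hx hxy (mul_nonneg hc hx)
    _ ≤ y ^ (c * y) := Real.rpow_le_rpow_of_exponent_le hy (mul_le_mul_of_nonneg_left hxy hc)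

lemma one_div_mem_Ioo_digit {α a : ℕ → ℝ} {δ : ℝ} (hα : ∀ n, α n ∈ Set.Ioo 0 δ)
    (hrec : ∀ n, 1 / α n = a n - α (n + 1)) (n : ℕ) : 1 / α n ∈ Set.Ioo (a n - δ) (a n) := by
  rw [hrec n]
  exact ⟨sub_lt_sub_left (hα (n + 1)).2 _, sub_lt_self _ (hα (n + 1)).1⟩

lemma one_div_rpow_lt_one_div_succ {α a : ℕ → ℝ} {δ c : ℝ} (hδ : δ ≤ 1)
    (hα : ∀ n, α n ∈ Set.Ioo 0 δ) (hrec : ∀ n, 1 / α n = a n - α (n + 1))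
    {n : ℕ} (hgrow : a n ^ (c * a n) + δ ≤ a (n + 1)) :
    (1 / α n) ^ (c / α n) < 1 / α (n + 1) := by
  have one_lt (k : ℕ) : 1 < 1 / α k := one_lt_one_div (hα k).1 ((hα k).2.trans_le hδ)
  rw [← mul_one_div c]
  rcases le_total c 0 with hc | hc
  · calc (1 / α n) ^ (c * (1 / α n)) ≤ 1 :=
          Real.rpow_le_one_of_one_le_of_nonpos (one_lt n).le
            (mul_nonpos_of_nonpos_of_nonneg hc (zero_le_one.trans (one_lt n).le))
      _ < 1 / α (n + 1) := one_lt (n + 1)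
  · have digit_gt : 1 / α n < a n := (one_div_mem_Ioo_digit hα hrec n).2
    calc (1 / α n) ^ (c * (1 / α n)) ≤ a n ^ (c * a n) :=
          rpow_mul_self_le_rpow_mul_self (zero_le_one.trans (one_lt n).le) digit_gt.le
            ((one_lt n).trans digit_gt).le hc
      _ ≤ a (n + 1) - δ := le_sub_iff_add_le.mpr hgrow
      _ < 1 / α (n + 1) := (one_div_mem_Ioo_digit hα hrec (n + 1)).1

theorem jagged_growth_estimate_general {α a u : ℕ → ℝ} {δ : ℝ} (hδ : δ ≤ 1)
    (hα : ∀ n, α n ∈ Set.Ioo 0 δ) (hrec : ∀ n, 1 / α n = a n - α (n + 1))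
    (hgrow : ∀ n, a n ^ (u n * a n) + δ ≤ a (n + 1)) (n : ℕ) :
    (1 / α n) ^ (u n / α n) < 1 / α (n + 1) ∧
      u n / α n * Real.log (1 / α n) ≤ Real.log (1 / α (n + 1)) := by
  have growth := one_div_rpow_lt_one_div_succ hδ hα hrec (hgrow n)
  have one_div_α_pos (k : ℕ) : 0 < 1 / α k := one_div_pos.mpr (hα k).1
  exact ⟨growth,
    (Real.rpow_le_iff_le_log (one_div_α_pos n) (one_div_α_pos (n + 1))).mp growth.le⟩

/-- For a jagged number one has `1/α_{n+1} > (1/α_n)^{u_n/α_n}` and hence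
`log(1/α_{n+1}) ≥ (u_n/α_n) · log(1/α_n)` for every `n`. -/
theorem jagged_growth_estimate
    (α : ℕ → ℝ) (a : ℕ → ℤ) (u : ℕ → ℝ)
    (hα : ∀ n, α n ∈ Set.Ioo (0:ℝ) (1/2))
    (ha : ∀ n, 2 ≤ a n)
    (hrec : ∀ n, 1 / α n = (a n : ℝ) - α (n+1))
    (hu : ∀ n, 0 < u n)
    (hgrow : ∀ n, ((a n : ℝ)) ^ (u n * (a n : ℝ)) + 1/2 ≤ ((a (n+1) : ℤ) : ℝ)) :
    ∀ n, (1 / α n) ^ (u n / α n) < 1 / α (n+1) ∧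
      (u n / α n) * Real.log (1 / α n) ≤ Real.log (1 / α (n+1)) :=
  jagged_growth_estimate_general (by norm_num) hα hrec hgrow
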